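/- arXiv:1910.08393 — 2 statements merged into one kernel-verified Lean document; each statement's English description precedes it below -/
import Mathlib

section
/- Let (x;τ)_i := x(x+τ)(x+2τ)⋯(x+(i−1)τ) denote the shifted factorial, and define the (n+1)×(n+1) matrices L, D, U, U′, D′, L′ with entries l_{ij} = (−x)^{i−j} C(n−j, n−i) (γ+jτ;τ)_{i−j} / (α+γ+2jτ;τ)_{i−j}, d_j = x^j (α;τ)_j (α+γ+2jτ;τ)_{n−j} / ((α+γ+(j−1)τ;τ)_j (α+β+γ+(n+j−1)τ;τ)_{n−j}), u_{ij} = (−1)^{j−i} C(j,i) (β+(n−j)τ;τ)_{j−i} / (α+γ+2iτ;τ)_{j−i}, u′_{ij} = (−x^{-1})^{j−i} C(j,i) (β+(n−j)τ;τ)_{j−i} / (α+β+2(n−j)τ;τ)_{j−i}, d′_j = x^j (α+β+2(n−j)τ;τ)_j (α;τ)_{n−j} / ((α+β+γ+(2n−j−1)τ;τ)_j (α+β+(n−j−1)τ;τ)_{n−j}), l′_{ij} = (−1)^{i−j} C(n−j,n−i) (γ+jτ;τ)_{i−j} / (α+β+2(n−i)τ;τ)_{i−j}, where l_{ij}=0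 for i<j, u_{ij}=0 for i>j, etc. Then LDU = U′D′L′ as matrices over the field of rational functions in α, β, γ, τ, x. -/
open scoped BigOperators

/-- The shifted factorial (x;τ)_i = x(x+τ)⋯(x+(i−1)τ). -/
noncomputable def shiftFact (x τ : ℂ) (i : ℕ) : ℂ :=
  ∏ k ∈ Finset.range i, (x + (k : ℂ) * τ)

noncomputable def matL (n : ℕ) (α γ τ x : ℂ) : Matrix (Fin (n + 1)) (Fin (n + 1)) ℂ :=
  Matrix.of fun i j =>
    if (j : ℕ) ≤ (i : ℕ) then
      (-x) ^ ((i : ℕ) - (j : ℕ)) * ((n - (j : ℕ)).choose (n - (i : ℕ)) : ℂ) *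
        shiftFact (γ + ((j : ℕ) : ℂ) * τ) τ ((i : ℕ) - (j : ℕ)) /
          shiftFact (α + γ + 2 * ((j : ℕ) : ℂ) * τ) τ ((i : ℕ) - (j : ℕ))
    else 0

noncomputable def matD (n : ℕ) (α β γ τ x : ℂ) : Matrix (Fin (n + 1)) (Fin (n + 1)) ℂ :=
  Matrix.diagonal fun j =>
    x ^ (j : ℕ) * shiftFact α τ (j : ℕ) * shiftFact (α + γ + 2 * ((j : ℕ) : ℂ) * τ) τ (n - (j : ℕ)) /
      (shiftFact (α + γ + (((j : ℕ) : ℂ) - 1) * τ) τ (j : ℕ) *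
        shiftFact (α + β + γ + ((n : ℂ) + ((j : ℕ) : ℂ) - 1) * τ) τ (n - (j : ℕ)))

noncomputable def matU (n : ℕ) (α β γ τ : ℂ) : Matrix (Fin (n + 1)) (Fin (n + 1)) ℂ :=
  Matrix.of fun i j =>
    if (i : ℕ) ≤ (j : ℕ) then
      (-1 : ℂ) ^ ((j : ℕ) - (i : ℕ)) * ((j : ℕ).choose (i : ℕ) : ℂ) *
        shiftFact (β + ((n : ℂ) - ((j : ℕ) : ℂ)) * τ) τ ((j : ℕ) - (i : ℕ)) /
          shiftFact (α + γ + 2 * ((i : ℕ) : ℂ) * τ) τ ((j : ℕ) - (i : ℕ))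
    else 0

noncomputable def matU' (n : ℕ) (α β τ x : ℂ) : Matrix (Fin (n + 1)) (Fin (n + 1)) ℂ :=
  Matrix.of fun i j =>
    if (i : ℕ) ≤ (j : ℕ) then
      (-x⁻¹) ^ ((j : ℕ) - (i : ℕ)) * ((j : ℕ).choose (i : ℕ) : ℂ) *
        shiftFact (β + ((n : ℂ) - ((j : ℕ) : ℂ)) * τ) τ ((j : ℕ) - (i : ℕ)) /
          shiftFact (α + β + 2 * ((n : ℂ) - ((j : ℕ) : ℂ)) * τ) τ ((j : ℕ) - (i : ℕ))
    else 0

noncomputable def matD' (n : ℕ) (α β γ τ x : ℂ) : Matrix (Fin (n + 1)) (Fin (n + 1)) ℂ :=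
  Matrix.diagonal fun j =>
    x ^ (j : ℕ) * shiftFact (α + β + 2 * ((n : ℂ) - ((j : ℕ) : ℂ)) * τ) τ (j : ℕ) *
        shiftFact α τ (n - (j : ℕ)) /
      (shiftFact (α + β + γ + (2 * (n : ℂ) - ((j : ℕ) : ℂ) - 1) * τ) τ (j : ℕ) *
        shiftFact (α + β + ((n : ℂ) - ((j : ℕ) : ℂ) - 1) * τ) τ (n - (j : ℕ)))

noncomputable def matL' (n : ℕ) (α β γ τ : ℂ) : Matrix (Fin (n + 1)) (Fin (n + 1)) ℂ :=
  Matrix.of fun i j =>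
    if (j : ℕ) ≤ (i : ℕ) then
      (-1 : ℂ) ^ ((i : ℕ) - (j : ℕ)) * ((n - (j : ℕ)).choose (n - (i : ℕ)) : ℂ) *
        shiftFact (γ + ((j : ℕ) : ℂ) * τ) τ ((i : ℕ) - (j : ℕ)) /
          shiftFact (α + β + 2 * ((n : ℂ) - ((i : ℕ) : ℂ)) * τ) τ ((i : ℕ) - (j : ℕ))
    else 0

/-
Reversing the order of the indices turns `U'`, `D'`, `L'` into `L`, `D`, `U` with `β` and `γ`
exchanged and `x` replaced by `x⁻¹`, so the claim is a symmetry of the entries of `L D U`. Each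
entry is a terminating very-well-poised `₇F₆` series, and Whipple's transformation turns it into
a balanced `₄F₃` series, in which the symmetry is visible. Whipple's transformation itself
follows by expanding two of the factors with the Pfaff–Saalschütz sum and summing the remaining
very-well-poised `₅F₄` series; both summations are proved by induction through a weighted form
of Pascal's rule.
-/

open Finset

theorem sum_antidiagonal_succ_choose_mul_of_weights {R : Type*} [CommSemiring R]
    [IsCancelMulZero R] [CharZero R] {m : ℕ} {f u v : ℕ → ℕ → R}
    (h : ∀ s t, s + t = m + 1 → (m + 1) * f s t = t * u s t + s * v s t) :
    ∑ p ∈ antidiagonal (m + 1), ((m + 1).choose p.1 : R) * f p.1 p.2 =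
      ∑ p ∈ antidiagonal m, (m.choose p.1 : R) * (u p.1 (p.2 + 1) + v (p.1 + 1) p.2) := by
  have sum_fst_mul : ∑ p ∈ antidiagonal (m + 1), ((m + 1).choose p.1 : R) * (p.1 * v p.1 p.2) =
      ∑ p ∈ antidiagonal m, (m + 1) * ((m.choose p.1 : R) * v (p.1 + 1) p.2) := by
    rw [Nat.sum_antidiagonal_succ, Nat.cast_zero, zero_mul, mul_zero, zero_add]
    refine sum_congr rfl fun p _ => ?_
    rw [← mul_assoc, ← mul_assoc]
    congr 1
    exact_mod_cast (Nat.add_one_mul_choose_eq m p.1).symm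
  have sum_snd_mul : ∑ p ∈ antidiagonal (m + 1), ((m + 1).choose p.1 : R) * (p.2 * u p.1 p.2) =
      ∑ p ∈ antidiagonal m, (m + 1) * ((m.choose p.1 : R) * u p.1 (p.2 + 1)) := by
    rw [Nat.sum_antidiagonal_succ', Nat.cast_zero, zero_mul, mul_zero, zero_add]
    refine sum_congr rfl fun p hp => ?_
    rw [← mul_assoc, ← mul_assoc, mul_comm (m + 1 : R)]
    congr 1
    have hsub : m + 1 - p.1 = p.2 + 1 := by have := mem_antidiagonal.mp hp; omega
    exact_mod_cast hsub ▸ (Nat.choose_mul_succ_eq m p.1).symm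
  have hm : (m + 1 : R) ≠ 0 := by exact_mod_cast m.succ_ne_zero
  apply mul_left_cancel₀ hm
  simp only [mul_add, sum_add_distrib, mul_sum, ← sum_fst_mul, ← sum_snd_mul]
  rw [← sum_add_distrib]
  refine sum_congr rfl fun p hp => ?_
  rw [mul_left_comm, h _ _ (mem_antidiagonal.mp hp), mul_add]

theorem sum_antidiagonal_choose_mul_choose_mul {R : Type*} [CommSemiring R] (f : ℕ → ℕ → R)
    (q r : ℕ) :
    ∑ p ∈ antidiagonal q, (q.choose p.1 : R) * (p.1.choose r * f p.1 p.2) =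
      q.choose r * ∑ p ∈ antidiagonal (q - r), ((q - r).choose p.1 : R) * f (r + p.1) p.2 := by
  rcases lt_or_ge q r with hqr | hrq
  · rw [Nat.choose_eq_zero_of_lt hqr, Nat.cast_zero, zero_mul]
    refine sum_eq_zero fun p hp => ?_
    have hp1 : p.1 < r := by have := mem_antidiagonal.mp hp; omega
    simp [Nat.choose_eq_zero_of_lt hp1]
  · obtain ⟨m, rfl⟩ := Nat.exists_eq_add_of_le hrq
    rw [Nat.add_sub_cancel_left, Nat.sum_antidiagonal_eq_sum_range_succ_mk,
      Nat.sum_antidiagonal_eq_sum_range_succ_mk, Nat.succ_eq_add_one, add_assoc, sum_range_add,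
      sum_eq_zero fun k hk => by simp [Nat.choose_eq_zero_of_lt (mem_range.mp hk)], zero_add,
      mul_sum]
    refine sum_congr rfl fun s _ => ?_
    have hchoose : (r + m).choose (r + s) * (r + s).choose r = (r + m).choose r * m.choose s := by
      simpa using Nat.choose_mul (n := r + m) (k := r + s) (s := r) (by omega)
    dsimp only
    rw [← mul_assoc, ← mul_assoc, Nat.add_sub_add_left, ← Nat.cast_mul, ← Nat.cast_mul, hchoose]

theorem shiftFact_zero (x τ : ℂ) : shiftFact x τ 0 = 1 := prod_range_zero _

theorem shiftFact_succ (x τ : ℂ) (m : ℕ) :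
    shiftFact x τ (m + 1) = shiftFact x τ m * (x + m * τ) :=
  prod_range_succ _ _

theorem shiftFact_add (x τ : ℂ) (m k : ℕ) :
    shiftFact x τ (m + k) = shiftFact x τ m * shiftFact (x + m * τ) τ k := by
  simp only [shiftFact, prod_range_add, Nat.cast_add, add_mul, add_assoc]

theorem shiftFact_succ' (x τ : ℂ) (m : ℕ) :
    shiftFact x τ (m + 1) = x * shiftFact (x + τ) τ m := by
  rw [add_comm, shiftFact_add, shiftFact_succ, shiftFact_zero]
  simp

theorem add_natCast_mul_ne_zero {a τ : ℂ} (h : ∀ k : ℕ, a + k * τ ≠ 0) (r k : ℕ) :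
    a + r * τ + k * τ ≠ 0 := by
  simpa [add_mul, add_assoc] using h (r + k)

theorem shiftFact_ne_zero {x τ : ℂ} (h : ∀ k : ℕ, x + k * τ ≠ 0) (m : ℕ) :
    shiftFact x τ m ≠ 0 :=
  prod_ne_zero_iff.mpr fun k _ => h k

theorem inv_shiftFact_add_mul {x τ : ℂ} (h : ∀ k : ℕ, x + k * τ ≠ 0) {k n : ℕ} (hkn : k ≤ n) :
    (shiftFact (x + k * τ) τ (n - k))⁻¹ = shiftFact x τ k / shiftFact x τ n := by
  nth_rewrite 2 [← Nat.add_sub_cancel' hkn]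
  rw [shiftFact_add, div_mul_cancel_left₀ (shiftFact_ne_zero h k)]

theorem shiftFact_add_mul_sub_eq_mul (x τ : ℂ) (i : ℕ) {j k : ℕ} (hkj : k ≤ j) :
    shiftFact (x + k * τ) τ (i - k) =
      shiftFact (x + k * τ) τ (min i j - k) * shiftFact (x + j * τ) τ (i - j) := by
  obtain hij | hji := le_total i j
  · rw [min_eq_left hij, Nat.sub_eq_zero_of_le hij, shiftFact_zero, mul_one]
  · rw [min_eq_right hji, show i - k = j - k + (i - j) by omega, shiftFact_add, Nat.cast_sub hkj]
    congr 2
    ring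

theorem shiftFact_add_sub_mul_eq_mul (x y τ : ℂ) {i k : ℕ} (hki : k ≤ i) (j : ℕ) :
    shiftFact (x + (y - j) * τ) τ (j - k) =
      shiftFact (x + (y - j) * τ) τ (j - i) *
        shiftFact (x + (y - (min i j : ℕ)) * τ) τ (min i j - k) := by
  obtain hij | hji := le_total i j
  · rw [min_eq_left hij, show j - k = j - i + (i - k) by omega, shiftFact_add, Nat.cast_sub hij]
    congr 2
    ring
  · rw [min_eq_right hji, Nat.sub_eq_zero_of_le hji, shiftFact_zero, one_mul]

theorem shiftFact_one_eq_eval_ascPochhammer (x : ℂ) (m : ℕ) :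
    shiftFact x 1 m = (ascPochhammer ℂ m).eval x := by
  induction m with
  | zero => simp [shiftFact_zero]
  | succ m ih => rw [shiftFact_succ, ih, ascPochhammer_succ_eval, mul_one]

theorem shiftFact_natCast_add_one_one (p m : ℕ) :
    shiftFact (p + 1) 1 m = m.factorial * (p + m).choose m := by
  rw [shiftFact_one_eq_eval_ascPochhammer, ← Nat.cast_succ,
    ascPochhammer_nat_eq_natCast_ascFactorial, Nat.ascFactorial_eq_factorial_mul_choose,
    Nat.cast_mul]

theorem shiftFact_neg_natCast_one (k r : ℕ) :
    shiftFact (-k) 1 r = (-1) ^ r * (r.factorial * k.choose r) := by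
  rw [shiftFact_one_eq_eval_ascPochhammer, ascPochhammer_eval_neg_eq_descPochhammer,
    descPochhammer_eval_eq_descFactorial, Nat.descFactorial_eq_factorial_mul_choose,
    Nat.cast_mul]

/- `a` and `w` are measured in units of `τ`, so that the sum also makes sense for `τ = 0`. -/
theorem pfaff_saalschutz (a w c τ : ℂ) (N : ℕ) :
    ∑ p ∈ antidiagonal N, (N.choose p.1 : ℂ) *
        (shiftFact a 1 p.1 * shiftFact w 1 p.2 * shiftFact (c - (a + w) * τ) τ p.1 *
          shiftFact (c + p.1 * τ) τ p.2) =
      shiftFact (a + w) 1 N * shiftFact (c - a * τ) τ N := by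
  induction N generalizing a w c with
  | zero => simp [shiftFact_zero]
  | succ N ih =>
    have hu := ih a (w + 1) (c + τ)
    have hv := ih (a + 1) w (c + 2 * τ)
    rw [show a + (w + 1) = a + w + 1 by ring, show c + τ - a * τ = c - a * τ + τ by ring,
      show c + τ - (a + w + 1) * τ = c - (a + w) * τ by ring] at hu
    rw [show a + 1 + w = a + w + 1 by ring, show c + 2 * τ - (a + 1) * τ = c - a * τ + τ by ring,
      show c + 2 * τ - (a + w + 1) * τ = c - (a + w) * τ + τ by ring] at hv
    rw [sum_antidiagonal_succ_choose_mul_of_weights (m := N)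
      (f := fun s t => shiftFact a 1 s * shiftFact w 1 t * shiftFact (c - (a + w) * τ) τ s *
          shiftFact (c + s * τ) τ t)
      (u := fun s t => c * (shiftFact a 1 s * shiftFact w 1 t *
        shiftFact (c - (a + w) * τ) τ s * shiftFact (c + τ + s * τ) τ (t - 1)))
      (v := fun s t => shiftFact a 1 s * shiftFact w 1 t * shiftFact (c - (a + w) * τ) τ s *
        shiftFact (c + τ + s * τ) τ t)]
    · calc
        _ = c * w * (shiftFact (a + w + 1) 1 N * shiftFact (c - a * τ + τ) τ N) +
            a * (c - (a + w) * τ) *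
              (shiftFact (a + w + 1) 1 N * shiftFact (c - a * τ + τ) τ N) := by
          nth_rewrite 1 [← hu]
          rw [← hv, mul_sum, mul_sum, ← sum_add_distrib]
          refine sum_congr rfl fun p _ => ?_
          rw [shiftFact_succ' a, shiftFact_succ' w, shiftFact_succ' (c - (a + w) * τ),
            show c + 2 * τ + p.1 * τ = c + τ + (p.1 + 1 : ℕ) * τ by push_cast; ring]
          simp only [Nat.add_sub_cancel]
          ring
        _ = _ := by
          rw [shiftFact_succ', shiftFact_succ']
          ring
    · rintro s (_ | t) hst
      · have hs : s = N + 1 := hst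
        simp [hs, shiftFact_zero]
      · have hN : (N : ℂ) = s + t := by norm_cast; omega
        rw [shiftFact_succ' (c + s * τ), Nat.add_sub_cancel, shiftFact_succ (_ + s * τ), hN,
          show c + s * τ + τ = c + τ + s * τ by ring]
        push_cast
        ring

/-- Summand, up to the binomial coefficient `(s + t).choose s`, of the terminating
very-well-poised `₅F₄` series with parameters `a`, `1 + a / 2`, `b`, `a + c + s + t`, `-(s + t)`
at unit argument, in units of `τ`. It is normalized by `(c)_{s+t}` times a ratio of shifted
factorials independent of `s`, which leaves no denominator other than one depending on `a`. -/
noncomputable def veryWellPoisedTerm (a b c τ : ℂ) (s t : ℕ) : ℂ :=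
  (a + 2 * s * τ) * shiftFact b τ s * shiftFact (a + c + (s + t) * τ) τ s *
    shiftFact (a - b + (s + 1) * τ) τ t * shiftFact c τ t / shiftFact (a + s * τ) τ (s + t + 1)

theorem veryWellPoisedTerm_succ_right {a τ : ℂ} (h : ∀ k : ℕ, a + k * τ ≠ 0) (b c : ℂ)
    (s t : ℕ) :
    (a + (2 * s + t + 1) * τ) * veryWellPoisedTerm a b c τ s (t + 1) =
      c * (a - b + (s + t + 1) * τ) * veryWellPoisedTerm a b (c + τ) τ s t := by
  have hlast : a + (2 * s + t + 1) * τ ≠ 0 := by exact_mod_cast h (2 * s + t + 1)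
  rw [veryWellPoisedTerm, veryWellPoisedTerm, ← add_assoc s t 1, shiftFact_succ _ τ (s + t + 1),
    shiftFact_succ (a - b + _), shiftFact_succ' c,
    show a + c + (s + (t + 1 : ℕ)) * τ = a + (c + τ) + (s + t) * τ by push_cast; ring,
    show a + s * τ + (s + t + 1 : ℕ) * τ = a + (2 * s + t + 1) * τ by push_cast; ring,
    ← mul_div_assoc, ← mul_div_assoc, mul_comm (shiftFact (a + s * τ) τ (s + t + 1)),
    mul_div_mul_left _ _ hlast]
  ring

theorem shiftFact_mul_veryWellPoisedTerm {a τ : ℂ} (h : ∀ k : ℕ, a + k * τ ≠ 0) (b c : ℂ)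
    (r s t : ℕ) :
    shiftFact (a + (r + s) * τ) τ r * veryWellPoisedTerm a b c τ (r + s) t =
      shiftFact b τ r * shiftFact (a + c + (r + s + t) * τ) τ r *
        veryWellPoisedTerm (a + 2 * r * τ) (b + r * τ) c τ s t := by
  have hne : shiftFact (a + (r + s) * τ) τ r ≠ 0 :=
    shiftFact_ne_zero (by exact_mod_cast add_natCast_mul_ne_zero h (r + s)) r
  rw [veryWellPoisedTerm, veryWellPoisedTerm, shiftFact_add b, add_assoc (r + s) t 1,
    add_assoc r s, ← add_assoc s t 1, shiftFact_add _ τ r (s + t + 1), shiftFact_add _ τ r s]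
  push_cast
  rw [← mul_div_assoc, ← mul_div_assoc, mul_div_mul_left _ _ hne,
    show a + (r + s) * τ + r * τ = a + 2 * r * τ + s * τ by ring,
    show a + c + (r + s + t) * τ + r * τ = a + 2 * r * τ + c + (s + t) * τ by ring,
    show a - b + (r + s + 1) * τ = a + 2 * r * τ - (b + r * τ) + (s + 1) * τ by ring]
  ring

theorem veryWellPoisedTerm_succ_left {a τ : ℂ} (h : ∀ k : ℕ, a + k * τ ≠ 0) (b c : ℂ) (s t : ℕ) :
    (a + (s + 1) * τ) * veryWellPoisedTerm a b c τ (s + 1) t =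
      b * (a + c + (s + t + 1) * τ) * veryWellPoisedTerm (a + 2 * τ) (b + τ) c τ s t := by
  have hone (y : ℂ) : shiftFact y τ 1 = y := by simp [shiftFact]
  have hmul := shiftFact_mul_veryWellPoisedTerm h b c 1 s t
  rw [hone, hone, hone, Nat.cast_one, mul_one, one_mul, add_comm 1 s, add_comm (1 : ℂ) s,
    add_right_comm (s : ℂ)] at hmul
  exact hmul

theorem sum_veryWellPoisedTerm {a τ : ℂ} (h : ∀ k : ℕ, a + k * τ ≠ 0) (b c : ℂ) (m : ℕ) :
    ∑ p ∈ antidiagonal m, (m.choose p.1 : ℂ) * veryWellPoisedTerm a b c τ p.1 p.2 =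
      shiftFact (b + c) τ m := by
  induction m generalizing a b c with
  | zero => simpa [veryWellPoisedTerm, shiftFact] using h 0
  | succ m ih =>
    have h' : ∀ k : ℕ, a + 2 * τ + k * τ ≠ 0 := add_natCast_mul_ne_zero h 2
    have hm : a + (m + 1) * τ ≠ 0 := by exact_mod_cast h (m + 1)
    have hu := ih h b (c + τ)
    have hv := ih h' (b + τ) c
    rw [← add_assoc] at hu
    rw [add_right_comm] at hv
    apply mul_left_cancel₀ hm
    calc
      _ = ∑ p ∈ antidiagonal (m + 1), ((m + 1).choose p.1 : ℂ) *
          ((a + (m + 1) * τ) * veryWellPoisedTerm a b c τ p.1 p.2) := by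
        simp only [mul_sum, mul_left_comm]
      _ = ∑ p ∈ antidiagonal m, (m.choose p.1 : ℂ) *
          ((a + (m + 1 + p.1) * τ) * veryWellPoisedTerm a b c τ p.1 (p.2 + 1) +
            (a + (p.1 + 1 : ℕ) * τ) * veryWellPoisedTerm a b c τ (p.1 + 1) p.2) := by
        refine sum_antidiagonal_succ_choose_mul_of_weights (m := m)
          (f := fun s t => (a + (m + 1) * τ) * veryWellPoisedTerm a b c τ s t)
          (u := fun s t => (a + (m + 1 + s) * τ) * veryWellPoisedTerm a b c τ s t)
          (v := fun s t => (a + s * τ) * veryWellPoisedTerm a b c τ s t) fun s t hst => ?_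
        rw [show (m : ℂ) + 1 = s + t by exact_mod_cast hst.symm]
        ring
      _ = c * (a - b + (m + 1) * τ) * shiftFact (b + c + τ) τ m +
          b * (a + c + (m + 1) * τ) * shiftFact (b + c + τ) τ m := by
        nth_rewrite 1 [← hu]
        rw [← hv, mul_sum, mul_sum, ← sum_add_distrib]
        refine sum_congr rfl fun p hp => ?_
        have hp : (m : ℂ) = p.1 + p.2 := by exact_mod_cast (mem_antidiagonal.mp hp).symm
        have hright := veryWellPoisedTerm_succ_right h b c p.1 p.2
        have hleft := veryWellPoisedTerm_succ_left h b c p.1 p.2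
        rw [hp, Nat.cast_succ]
        linear_combination (m.choose p.1 : ℂ) * (hright + hleft)
      _ = _ := by
        rw [shiftFact_succ']
        ring

theorem sum_choose_mul_shiftFact_mul_veryWellPoisedTerm {a τ : ℂ} (h : ∀ k : ℕ, a + k * τ ≠ 0)
    (b c : ℂ) (q r : ℕ) :
    ∑ p ∈ antidiagonal q, (q.choose p.1 : ℂ) *
        (p.1.choose r * shiftFact (a + p.1 * τ) τ r * veryWellPoisedTerm a b c τ p.1 p.2) =
      q.choose r * (shiftFact b τ r * shiftFact (a + c + q * τ) τ r *
        shiftFact (b + c + r * τ) τ (q - r)) := by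
  have hassoc (p : ℕ × ℕ) := mul_assoc (p.1.choose r : ℂ) (shiftFact (a + p.1 * τ) τ r)
    (veryWellPoisedTerm a b c τ p.1 p.2)
  simp only [hassoc]
  rw [sum_antidiagonal_choose_mul_choose_mul
    (fun s t => shiftFact (a + s * τ) τ r * veryWellPoisedTerm a b c τ s t)]
  rcases lt_or_ge q r with hqr | hrq
  · simp [Nat.choose_eq_zero_of_lt hqr]
  obtain ⟨m, rfl⟩ := Nat.exists_eq_add_of_le hrq
  have h' : ∀ k : ℕ, a + 2 * r * τ + k * τ ≠ 0 := by
    exact_mod_cast add_natCast_mul_ne_zero h (2 * r)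
  rw [Nat.add_sub_cancel_left, add_right_comm b,
    ← sum_veryWellPoisedTerm h' (b + r * τ) c m, mul_sum _ _ (_ * _)]
  congr 1
  refine sum_congr rfl fun p hp => ?_
  have hm : (m : ℂ) = p.1 + p.2 := by exact_mod_cast (mem_antidiagonal.mp hp).symm
  push_cast
  rw [shiftFact_mul_veryWellPoisedTerm h, hm, add_assoc (r : ℂ)]
  ring

theorem choose_mul_shiftFact_eq_sum (c τ : ℂ) (k m N : ℕ) :
    (m + N).choose N * shiftFact (c + k * τ) τ N =
      ∑ p ∈ antidiagonal N, (-1 : ℂ) ^ p.1 * k.choose p.1 * (k + m + p.2).choose p.2 *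
        shiftFact (c - (m + 1) * τ) τ p.1 * shiftFact (c + p.1 * τ) τ p.2 := by
  have hN : (N.factorial : ℂ) ≠ 0 := by exact_mod_cast N.factorial_ne_zero
  have saalschutz := pfaff_saalschutz (-k) ((k + m : ℕ) + 1) c τ N
  rw [show -(k : ℂ) + ((k + m : ℕ) + 1) = m + 1 by push_cast; ring,
    shiftFact_natCast_add_one_one, neg_mul, sub_neg_eq_add, mul_assoc] at saalschutz
  rw [← mul_right_inj' hN, ← saalschutz, mul_sum]
  refine sum_congr rfl fun p hp => ?_
  have hfact : (N.choose p.1 * p.1.factorial * p.2.factorial : ℂ) = N.factorial := by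
    rw [← mem_antidiagonal.mp hp, Nat.choose_symm_add]
    exact_mod_cast Nat.add_choose_mul_factorial_mul_factorial p.1 p.2
  rw [← hfact, shiftFact_neg_natCast_one, shiftFact_natCast_add_one_one]
  ring

theorem whipple_transformation {a τ : ℂ} (h : ∀ k : ℕ, a + k * τ ≠ 0) (b c : ℂ) (q d e : ℕ) :
    ∑ p ∈ antidiagonal q, (q.choose p.1 : ℂ) * ((p.2 + d + e).choose e *
        shiftFact (a + (q + d + p.1 + 1) * τ) τ e * veryWellPoisedTerm a b c τ p.1 p.2) =
      ∑ p ∈ antidiagonal e, (-1 : ℂ) ^ p.1 * (q + d + p.2).choose p.2 * q.choose p.1 *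
        shiftFact b τ p.1 * shiftFact (a + c + q * τ) τ p.1 *
          shiftFact (b + c + p.1 * τ) τ (q - p.1) *
            shiftFact (a + (q + d + p.1 + 1) * τ) τ p.2 := by
  calc
    _ = ∑ p ∈ antidiagonal q, ∑ p' ∈ antidiagonal e,
        (-1 : ℂ) ^ p'.1 * (q + d + p'.2).choose p'.2 *
          shiftFact (a + (q + d + p'.1 + 1) * τ) τ p'.2 * (q.choose p.1 *
            (p.1.choose p'.1 * shiftFact (a + p.1 * τ) τ p'.1 *
              veryWellPoisedTerm a b c τ p.1 p.2)) := by
      refine sum_congr rfl fun p hp => ?_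
      obtain rfl := mem_antidiagonal.mp hp
      rw [show a + ((p.1 + p.2 : ℕ) + d + p.1 + 1) * τ =
          a + ((p.1 + p.2 : ℕ) + d + 1) * τ + p.1 * τ by ring, choose_mul_shiftFact_eq_sum,
        sum_mul, mul_sum]
      refine sum_congr rfl fun p' _ => ?_
      rw [← add_assoc p.1 p.2 d,
        show a + ((p.1 + p.2 : ℕ) + d + 1) * τ - ((p.2 + d : ℕ) + 1) * τ = a + p.1 * τ by
          push_cast; ring,
        show a + ((p.1 + p.2 : ℕ) + d + 1) * τ + p'.1 * τ =
          a + ((p.1 + p.2 : ℕ) + d + p'.1 + 1) * τ by ring]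
      ring
    _ = _ := by
      rw [sum_comm]
      refine sum_congr rfl fun p' _ => ?_
      rw [← mul_sum, sum_choose_mul_shiftFact_mul_veryWellPoisedTerm h]
      ring

/-- The balanced (Saalschützian) terminating `₄F₃` series, in units of `τ` and with its denominators
cleared, that Whipple's transformation produces. The terms with `r > min q e` vanish. -/
noncomputable def balancedSum (n q e : ℕ) (α β γ τ : ℂ) : ℂ :=
  ∑ r ∈ range (n + 1), (-1) ^ r * r.factorial * (n - r).factorial * q.choose r * e.choose r *
    shiftFact α τ r * shiftFact (α + β + γ + (n - 1) * τ) τ r *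
      shiftFact (α + γ + (n - e + r) * τ) τ (e - r) * shiftFact (α + β + (n - q + r) * τ) τ (q - r)

theorem balancedSum_comm (n q e : ℕ) (α β γ τ : ℂ) :
    balancedSum n q e α β γ τ = balancedSum n e q α γ β τ := by
  refine sum_congr rfl fun r _ => ?_
  rw [add_right_comm α β γ]
  ring

theorem balancedSum_eq_sum_antidiagonal {n e : ℕ} (he : e ≤ n) (q : ℕ) (α β γ τ : ℂ) :
    balancedSum n q e α β γ τ = ∑ p ∈ antidiagonal e,
      (-1) ^ p.1 * p.1.factorial * (n - p.1).factorial * q.choose p.1 * e.choose p.1 *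
        shiftFact α τ p.1 * shiftFact (α + β + γ + (n - 1) * τ) τ p.1 *
          shiftFact (α + γ + (n - e + p.1) * τ) τ p.2 *
            shiftFact (α + β + (n - q + p.1) * τ) τ (q - p.1) := by
  rw [Nat.sum_antidiagonal_eq_sum_range_succ_mk, balancedSum]
  refine (sum_subset (range_subset_range.mpr (Nat.succ_le_succ he)) fun r _ hr => ?_).symm
  simp [Nat.choose_eq_zero_of_lt (by simpa using hr : e < r)]

theorem sum_veryWellPoisedTerm_eq_balancedSum {n p q : ℕ} (hqp : q ≤ p) (hpn : p ≤ n)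
    {α γ τ : ℂ} (β : ℂ) (h : ∀ k : ℕ, α + γ - τ + k * τ ≠ 0) :
    p.factorial * (n - p).factorial * ∑ k ∈ antidiagonal q, (q.choose k.1 : ℂ) *
        ((n - k.1).choose (n - p) * shiftFact (α + γ + (p + k.1) * τ) τ (n - p) *
          veryWellPoisedTerm (α + γ - τ) α (β + (n - q) * τ) τ k.1 k.2) =
      balancedSum n q (n - p) α β γ τ := by
  obtain ⟨d, rfl⟩ := Nat.exists_eq_add_of_le hqp
  obtain ⟨e, rfl⟩ := Nat.exists_eq_add_of_le hpn
  rw [Nat.add_sub_cancel_left]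
  calc
    _ = (q + d).factorial * e.factorial * ∑ k ∈ antidiagonal q, (q.choose k.1 : ℂ) *
        ((k.2 + d + e).choose e * shiftFact (α + γ - τ + (q + d + k.1 + 1) * τ) τ e *
          veryWellPoisedTerm (α + γ - τ) α (β + (d + e) * τ) τ k.1 k.2) := by
      congr 1
      refine sum_congr rfl fun k hk => ?_
      obtain rfl := mem_antidiagonal.mp hk
      rw [show k.1 + k.2 + d + e - k.1 = k.2 + d + e by omega]
      push_cast
      congr 4 <;> ring
    _ = _ := by
      rw [whipple_transformation h, mul_sum, balancedSum_eq_sum_antidiagonal (Nat.le_add_left ..)]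
      refine sum_congr rfl fun p hp => ?_
      obtain rfl := mem_antidiagonal.mp hp
      have hchoose : ((q + d).factorial * (p.1 + p.2).factorial * (q + d + p.2).choose p.2 : ℂ) =
          p.1.factorial * (q + d + p.2).factorial * (p.1 + p.2).choose p.1 := by
        rw [Nat.choose_symm_add, ← Nat.add_choose_mul_factorial_mul_factorial p.1 p.2,
          ← Nat.add_choose_mul_factorial_mul_factorial (q + d) p.2]
        push_cast
        ring
      rw [show q + d + (p.1 + p.2) - p.1 = q + d + p.2 by omega]
      push_cast
      rw [show α + γ - τ + (β + (d + (p.1 + p.2)) * τ) + q * τ =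
          α + β + γ + (q + d + (p.1 + p.2) - 1) * τ by ring,
        show α + (β + (d + (p.1 + p.2)) * τ) + p.1 * τ =
          α + β + (q + d + (p.1 + p.2) - q + p.1) * τ by ring,
        show α + γ - τ + (q + d + p.1 + 1) * τ =
          α + γ + (q + d + (p.1 + p.2) - (p.1 + p.2) + p.1) * τ by ring]
      linear_combination (-1) ^ p.1 * q.choose p.1 * shiftFact α τ p.1 *
        shiftFact (α + β + γ + (q + d + (p.1 + p.2) - 1) * τ) τ p.1 *
        shiftFact (α + β + (q + d + (p.1 + p.2) - q + p.1) * τ) τ (q - p.1) *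
        shiftFact (α + γ + (q + d + (p.1 + p.2) - (p.1 + p.2) + p.1) * τ) τ p.2 * hchoose

theorem choose_mul_choose_mul_factorial_comm {n i j k : ℕ} (hki : k ≤ i) (hkj : k ≤ j)
    (hin : i ≤ n) (hjn : j ≤ n) :
    (i.factorial * (n - i).factorial * ((n - k).choose (n - i) * j.choose k) : ℂ) =
      j.factorial * (n - j).factorial * ((n - k).choose (n - j) * i.choose k) := by
  have hfact (m : ℕ) : (m.factorial : ℂ) ≠ 0 := by exact_mod_cast m.factorial_ne_zero
  rw [Nat.cast_choose ℂ (Nat.sub_le_sub_left hki n), Nat.cast_choose ℂ hkj,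
    Nat.cast_choose ℂ (Nat.sub_le_sub_left hkj n), Nat.cast_choose ℂ hki,
    show n - k - (n - i) = i - k by omega, show n - k - (n - j) = j - k by omega]
  field_simp [hfact]

theorem choose_mul_choose_eq_min_max {n i j k : ℕ} (hki : k ≤ i) (hkj : k ≤ j)
    (hin : i ≤ n) (hjn : j ≤ n) :
    ((n - k).choose (n - i) * j.choose k : ℂ) =
      (max i j).factorial * (n - max i j).factorial / (i.factorial * (n - i).factorial) *
        ((min i j).choose k * (n - k).choose (n - max i j)) := by
  have hne : (i.factorial * (n - i).factorial : ℂ) ≠ 0 := by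
    exact_mod_cast mul_ne_zero i.factorial_ne_zero (n - i).factorial_ne_zero
  obtain hij | hji := le_total i j
  · rw [min_eq_left hij, max_eq_right hij, mul_comm (i.choose k : ℂ), div_mul_eq_mul_div,
      eq_div_iff hne, ← choose_mul_choose_mul_factorial_comm hki hkj hin hjn, mul_comm]
  · rw [min_eq_right hji, max_eq_left hji, mul_comm (j.choose k : ℂ), div_self hne, one_mul]

theorem neg_pow_mul_pow_mul_neg_one_pow (x : ℂ) {i j k : ℕ} (hki : k ≤ i) (hkj : k ≤ j) :
    (-x) ^ (i - k) * x ^ k * (-1) ^ (j - k) = (-1) ^ (i + j) * x ^ i := by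
  obtain ⟨s, rfl⟩ := Nat.exists_eq_add_of_le hki
  obtain ⟨t, rfl⟩ := Nat.exists_eq_add_of_le hkj
  rw [Nat.add_sub_cancel_left, Nat.add_sub_cancel_left, neg_pow,
    show k + s + (k + t) = s + t + 2 * k by ring, pow_add _ _ (2 * k), pow_mul]
  ring

theorem shiftFact_div_shiftFact_mul_shiftFact {a τ : ℂ} (h : ∀ k : ℕ, a + k * τ ≠ 0)
    {n i j k : ℕ} (hki : k ≤ i) (hkj : k ≤ j) (hin : i ≤ n) (hjn : j ≤ n) :
    shiftFact (a + (2 * k + 1) * τ) τ (n - k) /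
        (shiftFact (a + k * τ) τ k * (shiftFact (a + (2 * k + 1) * τ) τ (i - k) *
          shiftFact (a + (2 * k + 1) * τ) τ (j - k))) =
      shiftFact (a + ((max i j : ℕ) + k + 1) * τ) τ (n - max i j) * (a + 2 * k * τ) /
        shiftFact (a + k * τ) τ (min i j + 1) := by
  have hne (r m : ℕ) : shiftFact (a + r * τ) τ m ≠ 0 :=
    shiftFact_ne_zero (add_natCast_mul_ne_zero h r) m
  have hodd (m : ℕ) : shiftFact (a + (2 * k + 1) * τ) τ m ≠ 0 := by
    exact_mod_cast hne (2 * k + 1) m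
  have htop : shiftFact (a + (2 * k + 1) * τ) τ (n - k) =
      shiftFact (a + (2 * k + 1) * τ) τ (max i j - k) *
        shiftFact (a + ((max i j : ℕ) + k + 1) * τ) τ (n - max i j) := by
    rw [show n - k = max i j - k + (n - max i j) by omega, shiftFact_add,
      Nat.cast_sub (le_max_of_le_left hki)]
    congr 2
    ring
  have hbottom : shiftFact (a + k * τ) τ (min i j + 1) = shiftFact (a + k * τ) τ k *
      ((a + 2 * k * τ) * shiftFact (a + (2 * k + 1) * τ) τ (min i j - k)) := by
    rw [show min i j + 1 = k + (min i j - k + 1) by omega, shiftFact_add, shiftFact_succ']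
    ring_nf
  have hmid : a + 2 * k * τ ≠ 0 := by exact_mod_cast h (2 * k)
  have hminmax := fn_min_mul_fn_max (fun m => shiftFact (a + (2 * k + 1) * τ) τ (m - k)) i j
  rw [← hminmax, htop, hbottom]
  field_simp [hne, hodd]

theorem matL_mul_matD_mul_matU_summand {n : ℕ} {α β γ τ : ℂ}
    (h1 : ∀ k : ℕ, α + γ - τ + k * τ ≠ 0) (h3 : ∀ k : ℕ, α + β + γ + (n - 1) * τ + k * τ ≠ 0)
    (x : ℂ) {i j k : Fin (n + 1)} {p q : ℕ} (hp : max (i : ℕ) j = p) (hq : min (i : ℕ) j = q)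
    (hkq : k ≤ q) :
    (matL n α γ τ x * matD n α β γ τ x) i k * matU n α β γ τ k j =
      (-1) ^ (i + j : ℕ) * x ^ (i : ℕ) * shiftFact (γ + j * τ) τ (i - j) *
        shiftFact (β + (n - j) * τ) τ (j - i) /
          (shiftFact (α + β + γ + (n - 1) * τ) τ n * ((i : ℕ).factorial * (n - i).factorial)) *
        (p.factorial * (n - p).factorial * (q.choose k * ((n - k).choose (n - p) *
          shiftFact (α + γ + (p + k) * τ) τ (n - p) *
            veryWellPoisedTerm (α + γ - τ) α (β + (n - q) * τ) τ k (q - k)))) := by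
  have hki : (k : ℕ) ≤ i := by omega
  have hkj : (k : ℕ) ≤ j := by omega
  have hdenom := shiftFact_div_shiftFact_mul_shiftFact h1 hki hkj i.is_le j.is_le
  rw [hp, hq, show α + γ - τ + (2 * k + 1) * τ = α + γ + 2 * k * τ by ring,
    show α + γ - τ + k * τ = α + γ + (k - 1) * τ by ring,
    show α + γ - τ + (p + k + 1) * τ = α + γ + (p + k) * τ by ring] at hdenom
  have hinv := inv_shiftFact_add_mul h3 k.is_le
  rw [show α + β + γ + (n - 1) * τ + k * τ = α + β + γ + (n + k - 1) * τ by ring] at hinv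
  rw [matD, Matrix.mul_diagonal, matL, matU, Matrix.of_apply, Matrix.of_apply, if_pos hki,
    if_pos hkj]
  calc
    _ = (-x) ^ (i - k : ℕ) * x ^ (k : ℕ) * (-1) ^ (j - k : ℕ) *
        shiftFact (γ + k * τ) τ (i - k : ℕ) *
        shiftFact (β + (n - j) * τ) τ (j - k : ℕ) * shiftFact α τ k *
        (shiftFact (α + β + γ + (n + k - 1) * τ) τ (n - k))⁻¹ *
        ((n - k).choose (n - i) * (j : ℕ).choose k) *
        (shiftFact (α + γ + 2 * k * τ) τ (n - k) /
          (shiftFact (α + γ + (k - 1) * τ) τ k * (shiftFact (α + γ + 2 * k * τ) τ (i - k : ℕ) *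
            shiftFact (α + γ + 2 * k * τ) τ (j - k : ℕ)))) := by
      ring
    _ = _ := by
      rw [neg_pow_mul_pow_mul_neg_one_pow x hki hkj, hinv, hdenom,
        choose_mul_choose_eq_min_max hki hkj i.is_le j.is_le,
        shiftFact_add_mul_sub_eq_mul γ τ i hkj, shiftFact_add_sub_mul_eq_mul β n τ hki j, hp, hq,
        veryWellPoisedTerm, ← Nat.cast_add k, Nat.add_sub_cancel' hkq,
        show α + γ - τ + (β + (n - q) * τ) + q * τ =
          α + β + γ + (n - 1) * τ by ring,
        show α + γ - τ - α + (k + 1) * τ = γ + k * τ by ring,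
        show α + γ - τ + k * τ = α + γ + (k - 1) * τ by ring]
      ring

/-- The coefficient matrix `M` in closed form; both Gauss decompositions are decompositions of
it. In the exponents and lengths `i - j` and `j - i`, subtraction is truncated, so that one
formula covers both triangles. -/
noncomputable def coefficientMatrix (n : ℕ) (α β γ τ x : ℂ) :
    Matrix (Fin (n + 1)) (Fin (n + 1)) ℂ :=
  Matrix.of fun i j =>
    (-1) ^ (i + j : ℕ) * x ^ (i : ℕ) * shiftFact (γ + j * τ) τ (i - j) *
      shiftFact (β + (n - j) * τ) τ (j - i) /
        (shiftFact (α + β + γ + (n - 1) * τ) τ n * ((i : ℕ).factorial * (n - i).factorial)) *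
      balancedSum n (min (i : ℕ) j) (n - max (i : ℕ) j) α β γ τ

theorem matL_mul_matD_mul_matU_eq_coefficientMatrix {n : ℕ} {α β γ τ : ℂ}
    (h1 : ∀ c : ℤ, α + γ + c * τ ≠ 0) (h3 : ∀ c : ℤ, α + β + γ + c * τ ≠ 0) (x : ℂ) :
    matL n α γ τ x * matD n α β γ τ x * matU n α β γ τ = coefficientMatrix n α β γ τ x := by
  have h1' (k : ℕ) : α + γ - τ + k * τ ≠ 0 := by
    convert h1 (k - 1) using 1
    push_cast
    ring
  have h3' (k : ℕ) : α + β + γ + (n - 1) * τ + k * τ ≠ 0 := by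
    convert h3 (n - 1 + k) using 1
    push_cast
    ring
  ext i j
  have hi := i.is_le
  have hj := j.is_le
  obtain ⟨p, hp⟩ : ∃ p, max (i : ℕ) j = p := ⟨_, rfl⟩
  obtain ⟨q, hq⟩ : ∃ q, min (i : ℕ) j = q := ⟨_, rfl⟩
  rw [coefficientMatrix, Matrix.of_apply, hp, hq,
    ← sum_veryWellPoisedTerm_eq_balancedSum (p := p) (by omega) (by omega) β h1',
    Nat.sum_antidiagonal_eq_sum_range_succ_mk,
    sum_subset (range_subset_range.mpr (by omega : q + 1 ≤ n + 1)) fun k _ hk => by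
      simp [Nat.choose_eq_zero_of_lt (by simpa using hk : q < k)],
    sum_range, mul_sum, mul_sum, Matrix.mul_apply]
  refine sum_congr rfl fun k _ => ?_
  obtain hkq | hqk := le_or_gt (k : ℕ) q
  · exact matL_mul_matD_mul_matU_summand h1' h3' x hp hq hkq
  · rw [Nat.choose_eq_zero_of_lt hqk, Nat.cast_zero, zero_mul, mul_zero, mul_zero]
    obtain hik | hjk := min_lt_iff.mp (hq.trans_lt hqk)
    · simp [matD, matL, (Fin.lt_def.mpr hik).not_ge]
    · simp [matU, (Fin.lt_def.mpr hjk).not_ge]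

theorem matU'_eq_submatrix (n : ℕ) (α β τ x : ℂ) :
    matU' n α β τ x = (matL n α β τ x⁻¹).submatrix Fin.revPerm Fin.revPerm := by
  ext i j
  simp [matU', matL, Fin.val_rev, Nat.sub_sub_self i.is_le, Nat.sub_sub_self j.is_le,
    tsub_tsub_tsub_cancel_left j.is_le, Nat.cast_sub j.is_le]

theorem matL'_eq_submatrix (n : ℕ) (α β γ τ : ℂ) :
    matL' n α β γ τ = (matU n α γ β τ).submatrix Fin.revPerm Fin.revPerm := by
  ext i j
  simp [matL', matU, Fin.val_rev, tsub_tsub_tsub_cancel_left i.is_le, Nat.cast_sub i.is_le,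
    Nat.cast_sub j.is_le]

theorem matD'_eq_submatrix (n : ℕ) (α β γ τ : ℂ) {x : ℂ} (hx : x ≠ 0) :
    matD' n α β γ τ x = x ^ n • (matD n α γ β τ x⁻¹).submatrix Fin.revPerm Fin.revPerm := by
  rw [matD', matD, Matrix.submatrix_diagonal_equiv, ← Matrix.diagonal_smul]
  congr 1
  ext j
  have hrev : n + 1 - ((j : ℕ) + 1) = n - j := by omega
  have hpow : x ^ n * x⁻¹ ^ (n - j) = x ^ (j : ℕ) := by
    rw [inv_pow, ← pow_sub₀ x hx (n.sub_le j), Nat.sub_sub_self j.is_le]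
  simp only [Pi.smul_apply, Function.comp_apply, Fin.revPerm_apply, Fin.val_rev, smul_eq_mul,
    hrev, Nat.sub_sub_self j.is_le, Nat.cast_sub j.is_le, ← hpow]
  rw [show α + γ + β + (n + (n - j) - 1) * τ = α + β + γ + (2 * n - j - 1) * τ by ring]
  ring

theorem matU'_mul_matD'_mul_matL'_eq_submatrix (n : ℕ) (α β γ τ : ℂ) {x : ℂ} (hx : x ≠ 0) :
    matU' n α β τ x * matD' n α β γ τ x * matL' n α β γ τ =
      x ^ n • (matL n α β τ x⁻¹ * matD n α γ β τ x⁻¹ * matU n α γ β τ).submatrix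
        Fin.revPerm Fin.revPerm := by
  rw [matU'_eq_submatrix, matL'_eq_submatrix, matD'_eq_submatrix n α β γ τ hx, Matrix.mul_smul,
    Matrix.smul_mul, Matrix.submatrix_mul_equiv, Matrix.submatrix_mul_equiv]

theorem coefficientMatrix_eq_submatrix (n : ℕ) (α β γ τ : ℂ) {x : ℂ} (hx : x ≠ 0) :
    coefficientMatrix n α β γ τ x =
      x ^ n • (coefficientMatrix n α γ β τ x⁻¹).submatrix Fin.revPerm Fin.revPerm := by
  ext i j
  have hi := i.is_le
  have hj := j.is_le
  have hrev (k : Fin (n + 1)) : (k.rev : ℕ) = n - k := by rw [Fin.val_rev]; omega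
  have hpow : x ^ (i : ℕ) = x ^ n * x⁻¹ ^ (n - i) := by
    rw [inv_pow, ← pow_sub₀ x hx (n.sub_le i), Nat.sub_sub_self hi]
  have hsign : (-1 : ℂ) ^ (i + j : ℕ) = (-1) ^ (n - i + (n - j)) :=
    neg_one_pow_congr (by simp only [Nat.even_iff]; omega)
  have hmin : n - max (n - i) (n - j) = min (i : ℕ) j := by omega
  have hmax : min (n - i) (n - j) = n - max (i : ℕ) j := by omega
  simp only [coefficientMatrix, Matrix.smul_apply, Matrix.submatrix_apply, Matrix.of_apply,
    Fin.revPerm_apply, hrev, smul_eq_mul]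
  rw [hmin, hmax, balancedSum_comm, tsub_tsub_tsub_cancel_left hi, tsub_tsub_tsub_cancel_left hj,
    Nat.sub_sub_self hi, Nat.cast_sub hj, sub_sub_cancel, add_right_comm α γ β, hpow, hsign]
  ring

theorem matU'_mul_matD'_mul_matL'_eq_coefficientMatrix {n : ℕ} {α β γ τ x : ℂ} (hx : x ≠ 0)
    (h2 : ∀ c : ℤ, α + β + c * τ ≠ 0) (h3 : ∀ c : ℤ, α + β + γ + c * τ ≠ 0) :
    matU' n α β τ x * matD' n α β γ τ x * matL' n α β γ τ = coefficientMatrix n α β γ τ x := by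
  have h3' (c : ℤ) : α + γ + β + c * τ ≠ 0 := by rw [add_right_comm α]; exact h3 c
  rw [matU'_mul_matD'_mul_matL'_eq_submatrix n α β γ τ hx,
    matL_mul_matD_mul_matU_eq_coefficientMatrix h2 h3',
    ← coefficientMatrix_eq_submatrix n α β γ τ hx]

/-- The two Gauss decompositions LDU = U′D′L′ of the coefficient matrix M of the
difference system for the Selberg-type integral agree, for generic parameters. -/
theorem gauss_decompositions_agree (n : ℕ) (α β γ τ x : ℂ) (hx : x ≠ 0)
    (h1 : ∀ c : ℤ, α + γ + (c : ℂ) * τ ≠ 0)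
    (h2 : ∀ c : ℤ, α + β + (c : ℂ) * τ ≠ 0)
    (h3 : ∀ c : ℤ, α + β + γ + (c : ℂ) * τ ≠ 0) :
    matL n α γ τ x * matD n α β γ τ x * matU n α β γ τ =
      matU' n α β τ x * matD' n α β γ τ x * matL' n α β γ τ := by
  rw [matL_mul_matD_mul_matU_eq_coefficientMatrix h1 h3,
    matU'_mul_matD'_mul_matL'_eq_coefficientMatrix hx h2 h3]
end

section
/- Let ξ_j(x,a₂;t) = (x, xt, …, xt^{j−1}, a₂, a₂t, …, a₂t^{n−j−1}). Then for 0 ≤ i,j ≤ n, f_i(a₁,a₂;t; ξ_j(x,a₂;t)) = C_{t^{-1}}(j,i) · (xa₁^{-1};t)_{j−i} (xa₂^{-1}t^{-(n−j)};t)_i / ((a₁^{-1}a₂t^{n−j−i};t)_{j−i} (a₁a₂^{-1}t^{-(n−i)};t)_i), where C_{t^{-1}}(j,i) is the t^{-1}-binomial coefficient; in particular the left side vanishes when i > j. -/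
open scoped BigOperators

/-- The k-th element (0-indexed) of a finite set of naturals, listed increasingly. -/
def sortedEl (I : Finset ℕ) (k : ℕ) : ℕ := (I.sort (· ≤ ·)).getD k 0

/-- The Lagrange interpolation polynomial of type A:
f_r(a₁,a₂;t;z) = ∑_{I⊆{1,…,n},|I|=r} ∏_{k=1}^{r}(z_{i_k}−a₂t^{i_k−k})/(a₁t^{k−1}−a₂t^{i_k−k})
  ∏_{l=1}^{n−r}(z_{j_l}−a₁t^{j_l−l})/(a₂t^{l−1}−a₁t^{j_l−l}),
where I = {i₁<⋯<i_r} and {1,…,n}∖I = {j₁<⋯<j_{n−r}}; z is indexed by 1,…,n. -/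
noncomputable def lagrangeF (a₁ a₂ t : ℂ) (n r : ℕ) (z : ℕ → ℂ) : ℂ :=
  ∑ I ∈ Finset.powersetCard r (Finset.Icc 1 n),
    (∏ k ∈ Finset.range r,
        (z (sortedEl I k) - a₂ * t ^ (sortedEl I k - (k + 1))) /
          (a₁ * t ^ k - a₂ * t ^ (sortedEl I k - (k + 1)))) *
      ∏ l ∈ Finset.range (n - r),
        (z (sortedEl ((Finset.Icc 1 n) \ I) l) -
            a₁ * t ^ (sortedEl ((Finset.Icc 1 n) \ I) l - (l + 1))) /
          (a₂ * t ^ l - a₁ * t ^ (sortedEl ((Finset.Icc 1 n) \ I) l - (l + 1)))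

/-- The c-shifted factorial (x;c)_k = (1−x)(1−cx)⋯(1−c^{k−1}x). -/
noncomputable def qPoch (x c : ℂ) (k : ℕ) : ℂ :=
  ∏ i ∈ Finset.range k, (1 - c ^ i * x)

/-- The c-binomial coefficient, zero when k > m. -/
noncomputable def qBinom (c : ℂ) (m k : ℕ) : ℂ :=
  if k ≤ m then qPoch c c m / (qPoch c c (m - k) * qPoch c c k) else 0

/-- The point ξ_j(x,a₂;t) = (x, xt, …, xt^{j−1}, a₂, a₂t, …, a₂t^{n−j−1}), indexed by 1,…,n. -/
noncomputable def xiXNode (x a₂ t : ℂ) (j : ℕ) : ℕ → ℂ :=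
  fun k => if k ≤ j then x * t ^ (k - 1) else a₂ * t ^ (k - j - 1)

/-!
Splitting the sum over `I` according to whether `1 ∈ I` expresses `f_r(a₁, a₂; z)` through
`f_{r-1}(a₁ t, a₂; z₂, …, zₙ)` and `f_r(a₁, a₂ t; z₂, …, zₙ)`. Applied twice, this recursion shows
that `f_r` is symmetric in `z`, so the entries `a₂, a₂ t, …` of `ξ_j` may be moved to the front.
There the factor `z₁ - a₂` kills the first term of the recursion and the second has coefficient `1`:
each of these entries just disappears and replaces `a₂` by `a₂ t`. What is left is the value at the
geometric progression `x, x t, …, x t^{j-1}`, where the recursion matches the proposed closed form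
by the two `q`-Pascal rules.
-/

section Recursion

variable {K : Type*} [Field K]

/-- The recursive form of the Lagrange interpolation polynomial of type A, which removes the first
variable; the variables form a list, so that symmetry becomes invariance under `List.Perm`. -/
def lagrangeRec (t : K) : K → K → ℕ → List K → K
  | _, _, 0, [] => 1
  | _, _, _ + 1, [] => 0
  | a, b, 0, y :: l => (y - a) / (b - a) * lagrangeRec t a (b * t) 0 l
  | a, b, r + 1, y :: l =>
      (y - b) / (a - b) * lagrangeRec t (a * t) b r l +
        (y - a) / (b - a) * lagrangeRec t a (b * t) (r + 1) l

/-- The genericity condition on the parameters `a`, `b`: the progressions `a, a t, a t², …` and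
`b, b t, b t², …` are disjoint. -/
def GenericPair (t a b : K) : Prop := ∀ k l : ℕ, a * t ^ k ≠ b * t ^ l

namespace GenericPair

variable {t a b : K}

lemma symm (h : GenericPair t a b) : GenericPair t b a := fun k l => (h l k).symm

lemma mul_left (h : GenericPair t a b) : GenericPair t (a * t) b := fun k l => by
  simpa only [pow_succ', mul_assoc] using h (k + 1) l

lemma mul_right (h : GenericPair t a b) : GenericPair t a (b * t) := h.symm.mul_left.symm

lemma mul_pow_right (h : GenericPair t a b) (q : ℕ) : GenericPair t a (b * t ^ q) := fun k l => by
  simpa only [pow_add, mul_assoc] using h k (q + l)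

lemma ne_mul_pow (h : GenericPair t a b) (k : ℕ) : a ≠ b * t ^ k := by simpa using h 0 k

lemma ne (h : GenericPair t a b) : a ≠ b := by simpa using h.ne_mul_pow 0

end GenericPair

variable {t a b : K}

lemma cross_term_symm (h : GenericPair t a b) (y z : K) :
    (y - b) / (a - b) * ((z - a * t) / (b - a * t)) +
        (y - a) / (b - a) * ((z - b * t) / (a - b * t)) =
      (z - b) / (a - b) * ((y - a * t) / (b - a * t)) +
        (z - a) / (b - a) * ((y - b * t) / (a - b * t)) := by
  have hab : a - b ≠ 0 := sub_ne_zero.2 h.ne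
  have hba : b - a ≠ 0 := sub_ne_zero.2 h.symm.ne
  have hat : b - a * t ≠ 0 := sub_ne_zero.2 h.mul_left.symm.ne
  have hbt : a - b * t ≠ 0 := sub_ne_zero.2 h.mul_right.ne
  field_simp
  ring

lemma lagrangeRec_swap (h : GenericPair t a b) (r : ℕ) (y z : K) (l : List K) :
    lagrangeRec t a b r (y :: z :: l) = lagrangeRec t a b r (z :: y :: l) := by
  match r with
  | 0 =>
    simp only [lagrangeRec]
    ring
  | 1 =>
    simp only [lagrangeRec]
    linear_combination lagrangeRec t (a * t) (b * t) 0 l * cross_term_symm h y z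
  | r + 2 =>
    simp only [lagrangeRec]
    linear_combination lagrangeRec t (a * t) (b * t) (r + 1) l * cross_term_symm h y z

theorem lagrangeRec_perm {l l' : List K} (hl : l.Perm l') (h : GenericPair t a b) (r : ℕ) :
    lagrangeRec t a b r l = lagrangeRec t a b r l' := by
  induction hl generalizing a b r with
  | nil => rfl
  | cons y _ ih => cases r <;> simp only [lagrangeRec, ih h.mul_left, ih h.mul_right]
  | swap y z l => exact lagrangeRec_swap h r z y l
  | trans _ _ ih₁ ih₂ => exact (ih₁ h r).trans (ih₂ h r)

lemma lagrangeRec_cons_self (hab : a ≠ b) (r : ℕ) (l : List K) :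
    lagrangeRec t a b r (b :: l) = lagrangeRec t a (b * t) r l := by
  cases r <;> simp [lagrangeRec, div_self (sub_ne_zero.2 hab.symm)]

lemma lagrangeRec_iterate_append (h : GenericPair t a b) (q r : ℕ) (l : List K) :
    lagrangeRec t a b r (List.iterate (· * t) b q ++ l) = lagrangeRec t a (b * t ^ q) r l := by
  induction q generalizing b with
  | zero => simp
  | succ q ih =>
    rw [List.iterate, List.cons_append, lagrangeRec_cons_self h.ne, ih h.mul_right, pow_succ',
      mul_assoc]

end Recursion

section SubsetExpansion

open Finset

lemma sortedEl_map_succ {I : Finset ℕ} {k : ℕ} (hk : k < #I) :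
    sortedEl (I.map (addRightEmbedding 1)) k = sortedEl I k + 1 := by
  have hsort : (I.map (addRightEmbedding 1)).sort = I.sort.map (· + 1) :=
    (map_sort _ _ _ _ fun a _ b _ => by simp).symm
  simp [sortedEl, hsort, hk]

lemma sort_insert_one_map_succ {I : Finset ℕ} (h0 : 0 ∉ I) :
    (insert 1 (I.map (addRightEmbedding 1))).sort =
      1 :: (I.map (addRightEmbedding 1)).sort :=
  sort_insert _ (by simp) (by simpa using h0)

lemma lt_sortedEl {I : Finset ℕ} (h0 : 0 ∉ I) {k : ℕ} (hk : k < #I) : k < sortedEl I k := by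
  have hlen : k < I.sort.length := by simpa using hk
  have hget : ∀ m (hm : m < I.sort.length), sortedEl I m = I.sort[m] := fun m hm =>
    List.getD_eq_getElem _ _ hm
  induction k with
  | zero =>
    have hmem : sortedEl I 0 ∈ I := by
      rw [hget 0 hlen, ← mem_sort (· ≤ ·)]
      exact List.getElem_mem _
    exact Nat.pos_of_ne_zero fun h => h0 (h ▸ hmem)
  | succ k ih =>
    have hstep : sortedEl I k < sortedEl I (k + 1) := by
      rw [hget k (by omega), hget (k + 1) hlen]
      exact (sortedLT_sort I).getElem_lt_getElem_iff.2 k.lt_succ_self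
    have hprev : k < sortedEl I k := ih (by omega) (by omega)
    omega

/-- The factor of the summand of `lagrangeF` attached to `I`; the other factor is that of the
complement of `I`, with the two parameters exchanged. -/
def subsetWeight {K : Type*} [Field K] (a b t : K) (z : ℕ → K) (I : Finset ℕ) : K :=
  ∏ k ∈ range #I, (z (sortedEl I k) - b * t ^ (sortedEl I k - (k + 1))) /
    (a * t ^ k - b * t ^ (sortedEl I k - (k + 1)))

section SubsetWeight

variable {K : Type*} [Field K] (a b t : K) (z : ℕ → K) {I : Finset ℕ}

lemma subsetWeight_map_succ (h0 : 0 ∉ I) :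
    subsetWeight a b t z (I.map (addRightEmbedding 1)) =
      subsetWeight a (b * t) t (fun k => z (k + 1)) I := by
  rw [subsetWeight, subsetWeight, card_map]
  refine prod_congr rfl fun k hk => ?_
  have hlt : k < sortedEl I k := lt_sortedEl h0 (mem_range.1 hk)
  rw [sortedEl_map_succ (mem_range.1 hk),
    show sortedEl I k + 1 - (k + 1) = sortedEl I k - (k + 1) + 1 by omega, pow_succ', mul_assoc]

lemma subsetWeight_insert_one_map_succ (h0 : 0 ∉ I) :
    subsetWeight a b t z (insert 1 (I.map (addRightEmbedding 1))) =
      (z 1 - b) / (a - b) * subsetWeight (a * t) b t (fun k => z (k + 1)) I := by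
  have hfirst : sortedEl (insert 1 (I.map (addRightEmbedding 1))) 0 = 1 := by
    simp [sortedEl, sort_insert_one_map_succ h0]
  have hsucc : ∀ k < #I, sortedEl (insert 1 (I.map (addRightEmbedding 1))) (k + 1) =
      sortedEl I k + 1 := fun k hk => by
    rw [← sortedEl_map_succ hk, sortedEl, sort_insert_one_map_succ h0, List.getD_cons_succ,
      sortedEl]
  rw [subsetWeight, subsetWeight, card_insert_of_notMem (by simpa using h0), card_map,
    prod_range_succ', mul_comm, hfirst]
  congr 1
  · simp
  · refine prod_congr rfl fun k hk => ?_
    rw [hsucc k (mem_range.1 hk), Nat.add_sub_add_right, pow_succ', mul_assoc]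

end SubsetWeight

lemma lagrangeF_eq_sum_subsetWeight (a b t : ℂ) (n r : ℕ) (z : ℕ → ℂ) :
    lagrangeF a b t n r z =
      ∑ I ∈ powersetCard r (Icc 1 n),
        subsetWeight a b t z I * subsetWeight b a t z (Icc 1 n \ I) := by
  refine sum_congr rfl fun I hI => ?_
  obtain ⟨hsub, hcard⟩ := mem_powersetCard.1 hI
  rw [subsetWeight, subsetWeight, card_sdiff_of_subset hsub, hcard, Nat.card_Icc,
    Nat.add_sub_cancel]

lemma Icc_one_succ_eq_insert_map (n : ℕ) :
    Icc 1 (n + 1) = insert 1 ((Icc 1 n).map (addRightEmbedding 1)) := by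
  rw [map_add_right_Icc, insert_Icc_add_one_left_eq_Icc (by omega)]

lemma zero_notMem_of_subset_Icc_one {I : Finset ℕ} {n : ℕ} (hI : I ⊆ Icc 1 n) : 0 ∉ I :=
  fun h => by simpa using hI h

lemma sum_powersetCard_map_succ (a b t : ℂ) (n r : ℕ) (z : ℕ → ℂ) :
    ∑ I ∈ powersetCard r ((Icc 1 n).map (addRightEmbedding 1)),
        subsetWeight a b t z I * subsetWeight b a t z (Icc 1 (n + 1) \ I) =
      (z 1 - a) / (b - a) * lagrangeF a (b * t) t n r (fun k => z (k + 1)) := by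
  rw [powersetCard_map, sum_map, lagrangeF_eq_sum_subsetWeight, mul_sum]
  refine sum_congr rfl fun I hI => ?_
  have h0 : 0 ∉ I := zero_notMem_of_subset_Icc_one (mem_powersetCard.1 hI).1
  have hcompl : Icc 1 (n + 1) \ I.map (addRightEmbedding 1) =
      insert 1 ((Icc 1 n \ I).map (addRightEmbedding 1)) := by
    rw [Icc_one_succ_eq_insert_map, insert_sdiff_of_notMem _ (by simpa using h0), Finset.map_sdiff]
  rw [RelEmbedding.coe_toEmbedding, mapEmbedding_apply, hcompl, subsetWeight_map_succ _ _ _ _ h0,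
    subsetWeight_insert_one_map_succ _ _ _ _ (zero_notMem_of_subset_Icc_one sdiff_subset)]
  ring

lemma sum_powersetCard_insert_one_map_succ (a b t : ℂ) (n r : ℕ) (z : ℕ → ℂ) :
    ∑ I ∈ powersetCard r ((Icc 1 n).map (addRightEmbedding 1)),
        subsetWeight a b t z (insert 1 I) * subsetWeight b a t z (Icc 1 (n + 1) \ insert 1 I) =
      (z 1 - b) / (a - b) * lagrangeF (a * t) b t n r (fun k => z (k + 1)) := by
  rw [powersetCard_map, sum_map, lagrangeF_eq_sum_subsetWeight, mul_sum]
  refine sum_congr rfl fun I hI => ?_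
  have h0 : 0 ∉ I := zero_notMem_of_subset_Icc_one (mem_powersetCard.1 hI).1
  have hcompl : Icc 1 (n + 1) \ insert 1 (I.map (addRightEmbedding 1)) =
      (Icc 1 n \ I).map (addRightEmbedding 1) := by
    rw [Icc_one_succ_eq_insert_map, insert_sdiff_insert, sdiff_insert_of_notMem (by simp),
      Finset.map_sdiff]
  rw [RelEmbedding.coe_toEmbedding, mapEmbedding_apply, hcompl,
    subsetWeight_insert_one_map_succ _ _ _ _ h0,
    subsetWeight_map_succ _ _ _ _ (zero_notMem_of_subset_Icc_one sdiff_subset)]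
  ring

lemma lagrangeF_succ_zero (a b t : ℂ) (n : ℕ) (z : ℕ → ℂ) :
    lagrangeF a b t (n + 1) 0 z =
      (z 1 - a) / (b - a) * lagrangeF a (b * t) t n 0 (fun k => z (k + 1)) := by
  rw [← sum_powersetCard_map_succ, lagrangeF_eq_sum_subsetWeight, powersetCard_zero,
    powersetCard_zero]

lemma sum_powersetCard_succ_insert {α M : Type*} [DecidableEq α] [AddCommMonoid M] {x : α}
    {s : Finset α} (hx : x ∉ s) (r : ℕ) (f : Finset α → M) :
    ∑ I ∈ powersetCard (r + 1) (insert x s), f I =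
      ∑ I ∈ powersetCard (r + 1) s, f I + ∑ I ∈ powersetCard r s, f (insert x I) := by
  have hmem : ∀ k, ∀ I ∈ powersetCard k s, x ∉ I := fun k I hI h => hx ((mem_powersetCard.1 hI).1 h)
  have hdisj : Disjoint (powersetCard (r + 1) s) ((powersetCard r s).image (insert x)) := by
    refine disjoint_right.2 fun I hI hI' => ?_
    obtain ⟨J, -, rfl⟩ := mem_image.1 hI
    exact hmem _ _ hI' (mem_insert_self x J)
  rw [powersetCard_succ_insert hx, sum_union hdisj, sum_image fun I hI J hJ h => ?_]
  rw [← erase_insert (hmem r I hI), ← erase_insert (hmem r J hJ), h]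

lemma lagrangeF_succ_succ (a b t : ℂ) (n r : ℕ) (z : ℕ → ℂ) :
    lagrangeF a b t (n + 1) (r + 1) z =
      (z 1 - b) / (a - b) * lagrangeF (a * t) b t n r (fun k => z (k + 1)) +
        (z 1 - a) / (b - a) * lagrangeF a (b * t) t n (r + 1) (fun k => z (k + 1)) := by
  have hone : 1 ∉ (Icc 1 n).map (addRightEmbedding 1) := by simp
  rw [← sum_powersetCard_map_succ, ← sum_powersetCard_insert_one_map_succ,
    lagrangeF_eq_sum_subsetWeight]
  conv_lhs => rw [congrArg (powersetCard (r + 1)) (Icc_one_succ_eq_insert_map n)]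
  rw [sum_powersetCard_succ_insert hone, add_comm]

theorem lagrangeF_eq_lagrangeRec (a b t : ℂ) (n r : ℕ) (z : ℕ → ℂ) :
    lagrangeF a b t n r z = lagrangeRec t a b r ((List.range n).map fun k => z (k + 1)) := by
  induction n generalizing a b r z with
  | zero =>
    rw [lagrangeF_eq_sum_subsetWeight, show Icc 1 0 = (∅ : Finset ℕ) from rfl, List.range_zero]
    cases r with
    | zero => simp [subsetWeight, lagrangeRec]
    | succ r => rw [powersetCard_eq_empty.2 (by simp), sum_empty, List.map_nil, lagrangeRec]
  | succ n ih =>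
    cases r <;>
      simp only [List.range_succ_eq_map, List.map_cons, List.map_map, Function.comp_def,
        lagrangeRec, lagrangeF_succ_zero, lagrangeF_succ_succ, ih, zero_add, Nat.succ_eq_add_one]

lemma map_xiXNode_eq_iterate_append (x a₂ t : ℂ) (j q : ℕ) :
    ((List.range (j + q)).map fun k => xiXNode x a₂ t j (k + 1)) =
      List.iterate (· * t) x j ++ List.iterate (· * t) a₂ q := by
  rw [List.range_add, List.map_append, List.map_map, ← List.range_map_iterate,
    ← List.range_map_iterate]
  simp only [mul_right_iterate]
  congr 1 <;> refine List.map_congr_left fun k hk => ?_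
  · simp [xiXNode, Nat.succ_le_of_lt (List.mem_range.1 hk)]
  · simp [xiXNode, Nat.add_assoc]

end SubsetExpansion

section QSeries

lemma qPoch_zero (y c : ℂ) : qPoch y c 0 = 1 := Finset.prod_range_zero _

lemma qPoch_succ (y c : ℂ) (k : ℕ) : qPoch y c (k + 1) = qPoch y c k * (1 - c ^ k * y) :=
  Finset.prod_range_succ _ _

lemma qPoch_succ' (y c : ℂ) (k : ℕ) :
    qPoch y c (k + 1) = (1 - y) * qPoch (y * c) c k := by
  rw [qPoch, Finset.prod_range_succ', mul_comm]
  simp [qPoch, pow_succ, mul_assoc, mul_comm]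

lemma qPoch_self_succ (c : ℂ) (k : ℕ) : qPoch c c (k + 1) = qPoch c c k * (1 - c ^ (k + 1)) := by
  rw [qPoch_succ, pow_succ]

variable {c : ℂ}

lemma qPoch_self_ne_zero (hc : ∀ k : ℕ, c ^ (k + 1) ≠ 1) (k : ℕ) : qPoch c c k ≠ 0 :=
  Finset.prod_ne_zero_iff.2 fun i _ => by simpa [← pow_succ, sub_eq_zero] using (hc i).symm

lemma qBinom_add (c : ℂ) (i p : ℕ) :
    qBinom c (i + p) i = qPoch c c (i + p) / (qPoch c c p * qPoch c c i) := by
  rw [qBinom, if_pos (by omega), Nat.add_sub_cancel_left]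

lemma qBinom_symm (c : ℂ) {m k : ℕ} (h : k ≤ m) : qBinom c m k = qBinom c m (m - k) := by
  simp only [qBinom, if_pos h, if_pos (Nat.sub_le m k), Nat.sub_sub_self h, mul_comm]

lemma qBinom_eq_zero {m k : ℕ} (h : m < k) : qBinom c m k = 0 := if_neg h.not_ge

lemma qBinom_zero (hc : ∀ k : ℕ, c ^ (k + 1) ≠ 1) (m : ℕ) : qBinom c m 0 = 1 := by
  simp [qBinom, qPoch_zero, qPoch_self_ne_zero hc]

lemma qBinom_self (hc : ∀ k : ℕ, c ^ (k + 1) ≠ 1) (m : ℕ) : qBinom c m m = 1 := by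
  simp [qBinom, qPoch_zero, qPoch_self_ne_zero hc]

lemma qBinom_succ_succ (hc : ∀ k : ℕ, c ^ (k + 1) ≠ 1) (m k : ℕ) :
    qBinom c (m + 1) (k + 1) = qBinom c m k + c ^ (k + 1) * qBinom c m (k + 1) := by
  rcases lt_trichotomy m k with h | rfl | h
  · simp [qBinom_eq_zero, h, h.trans k.lt_succ_self]
  · simp [qBinom_self hc, qBinom_eq_zero]
  · obtain ⟨p, rfl⟩ := Nat.exists_eq_add_of_lt h
    have hQ := qPoch_self_ne_zero hc
    have hne : ∀ k : ℕ, 1 - c ^ (k + 1) ≠ 0 := fun k => sub_ne_zero.2 (hc k).symm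
    rw [show k + p + 1 + 1 = (k + 1) + (p + 1) by omega, qBinom_add,
      show k + p + 1 = k + (p + 1) by omega, qBinom_add,
      show k + (p + 1) = (k + 1) + p by omega, qBinom_add, ← add_assoc, qPoch_self_succ _ p,
      qPoch_self_succ _ k, qPoch_self_succ]
    field_simp [hQ k, hQ p, hne k, hne p]
    ring

lemma qBinom_succ_succ' (hc : ∀ k : ℕ, c ^ (k + 1) ≠ 1) (m k : ℕ) :
    qBinom c (m + 1) (k + 1) = c ^ (m - k) * qBinom c m k + qBinom c m (k + 1) := by
  rcases lt_trichotomy m k with h | rfl | h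
  · simp [qBinom_eq_zero, h, h.trans k.lt_succ_self]
  · simp [qBinom_self hc, qBinom_eq_zero]
  · obtain ⟨p, rfl⟩ := Nat.exists_eq_add_of_lt h
    rw [qBinom_symm c (show k + 1 ≤ k + p + 1 + 1 by omega),
      qBinom_symm c (show k ≤ k + p + 1 by omega), qBinom_symm c (show k + 1 ≤ k + p + 1 by omega),
      show k + p + 1 + 1 - (k + 1) = p + 1 by omega, show k + p + 1 - k = p + 1 by omega,
      show k + p + 1 - (k + 1) = p by omega, qBinom_succ_succ hc, add_comm]

lemma sub_mul_qBinom_succ_succ (hc : ∀ k : ℕ, c ^ (k + 1) ≠ 1) (a b : ℂ) (m k : ℕ) :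
    (b - a) * qBinom c (m + 1) (k + 1) =
      (b - a * c ^ (m - k)) * qBinom c m k + (b * c ^ (k + 1) - a) * qBinom c m (k + 1) := by
  linear_combination b * qBinom_succ_succ hc m k - a * qBinom_succ_succ' hc m k

end QSeries

section GeometricProgression

variable {a b t x : ℂ}

/-- The closed form without its binomial coefficient, where `p = j - i` and `b = a₂ t^{n-j}`. -/
noncomputable def qPochRatio (a b t x : ℂ) (i p : ℕ) : ℂ :=
  qPoch (x / a) t p * qPoch (x / b) t i /
    (qPoch (b / (a * t ^ i)) t p * qPoch (a / (b * t ^ p)) t i)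

lemma qPochRatio_swap (a b t x : ℂ) (i p : ℕ) :
    qPochRatio a b t x i p = qPochRatio b a t x p i := by
  simp only [qPochRatio, mul_comm]

lemma qPochRatio_succ_left (hb : b ≠ 0) (ht : t ≠ 0) (h : GenericPair t a b) (i p : ℕ) :
    (x - b) / (a - b) * qPochRatio (a * t) b t (x * t) i p =
      (b - a * t⁻¹ ^ p) / (b - a) * qPochRatio a b t x (i + 1) p := by
  have hba : b - a ≠ 0 := sub_ne_zero.2 h.symm.ne
  have hlast : 1 - a / (b * t ^ p) ≠ 0 :=
    sub_ne_zero.2 (div_ne_one_of_ne (h.ne_mul_pow p)).symm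
  have hx : (x - b) / (a - b) = b * (1 - x / b) / (b - a) := by
    rw [← neg_sub b a, ← neg_sub b x, neg_div_neg_eq, mul_sub, mul_one, mul_div_cancel₀ _ hb]
  have hp : b - a * t⁻¹ ^ p = b * (1 - a / (b * t ^ p)) := by
    rw [inv_pow]
    field_simp
  rw [hx, hp, qPochRatio, qPochRatio, qPoch_succ' (x / b), qPoch_succ' (a / (b * t ^ p)),
    mul_div_mul_right _ _ ht, div_mul_eq_mul_div x b, div_mul_eq_mul_div a, mul_assoc a,
    ← pow_succ']
  generalize 1 - a / (b * t ^ p) = v at hlast ⊢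
  field_simp

lemma qPochRatio_succ_right (ha : a ≠ 0) (ht : t ≠ 0) (h : GenericPair t a b) (i p : ℕ) :
    (x - a) / (b - a) * qPochRatio a (b * t) t (x * t) i p =
      (a - b * t⁻¹ ^ i) / (a - b) * qPochRatio a b t x i (p + 1) := by
  rw [qPochRatio_swap, qPochRatio_swap a, qPochRatio_succ_left ha ht h.symm]

theorem lagrangeRec_iterate (ht : t ≠ 0) (hroot : ∀ k : ℕ, t ^ (k + 1) ≠ 1)
    (ha : a ≠ 0) (hb : b ≠ 0) (h : GenericPair t a b) (i j : ℕ) :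
    lagrangeRec t a b i (List.iterate (· * t) x j) =
      qBinom t⁻¹ j i * qPochRatio a b t x i (j - i) := by
  have hinv : ∀ k : ℕ, t⁻¹ ^ (k + 1) ≠ 1 := fun k => by simpa [inv_pow] using hroot k
  induction j generalizing a b x i with
  | zero => cases i <;> simp [lagrangeRec, qBinom_zero hinv, qBinom_eq_zero, qPochRatio, qPoch_zero]
  | succ j ih =>
    have hab : a - b ≠ 0 := sub_ne_zero.2 h.ne
    have hba : b - a ≠ 0 := sub_ne_zero.2 h.symm.ne
    have ihl := ih (x := x * t) (mul_ne_zero ha ht) hb h.mul_left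
    have ihr := ih (x := x * t) ha (mul_ne_zero hb ht) h.mul_right
    cases i with
    | zero =>
      rw [List.iterate, lagrangeRec, ihr, qBinom_zero hinv, qBinom_zero hinv, one_mul, one_mul,
        Nat.sub_zero, Nat.sub_zero, qPochRatio_succ_right ha ht h, pow_zero, mul_one,
        div_self hab, one_mul]
    | succ i =>
      have hright : (x - a) / (b - a) * (qBinom t⁻¹ j (i + 1) *
          qPochRatio a (b * t) t (x * t) (i + 1) (j - (i + 1))) =
          qBinom t⁻¹ j (i + 1) * ((a - b * t⁻¹ ^ (i + 1)) / (a - b) *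
            qPochRatio a b t x (i + 1) (j - i)) := by
        rcases le_or_gt j i with hji | hij
        · simp [qBinom_eq_zero (Nat.lt_succ_of_le hji)]
        · rw [mul_left_comm, qPochRatio_succ_right ha ht h,
            show j - (i + 1) + 1 = j - i by omega]
      rw [List.iterate, lagrangeRec, ihl, ihr, hright, mul_left_comm,
        qPochRatio_succ_left hb ht h, Nat.add_sub_add_right]
      have hsign : (a - b * t⁻¹ ^ (i + 1)) / (a - b) = (b * t⁻¹ ^ (i + 1) - a) / (b - a) := by
        rw [← neg_sub b a, ← neg_sub _ a, neg_div_neg_eq]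
      rw [hsign, ← mul_right_inj' hba, ← mul_assoc (b - a), sub_mul_qBinom_succ_succ hinv]
      field_simp

end GeometricProgression

/-- Evaluation of the Lagrange interpolation polynomial of type A at ξ_j(x,a₂;t);
in particular the left side vanishes when i > j. -/
theorem lagrange_eval_xi (n i j : ℕ) (hi : i ≤ n) (hj : j ≤ n) (a₁ a₂ t x : ℂ)
    (ha₁ : a₁ ≠ 0) (ha₂ : a₂ ≠ 0) (ht : t ≠ 0) (hx : x ≠ 0)
    (hgen : ∀ k l : ℤ, a₁ * t ^ k ≠ a₂ * t ^ l)
    (hroot : ∀ m : ℤ, m ≠ 0 → t ^ m ≠ 1) :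
    lagrangeF a₁ a₂ t n i (xiXNode x a₂ t j) =
      qBinom t⁻¹ j i * (qPoch (x * a₁⁻¹) t (j - i) * qPoch (x * a₂⁻¹ * (t⁻¹) ^ (n - j)) t i /
        (qPoch (a₁⁻¹ * a₂ * t ^ ((n : ℤ) - j - i)) t (j - i) *
          qPoch (a₁ * a₂⁻¹ * (t⁻¹) ^ (n - i)) t i)) := by
  have hab : GenericPair t a₁ a₂ := fun k l => mod_cast hgen k l
  have hroot' : ∀ k : ℕ, t ^ (k + 1) ≠ 1 := fun k => mod_cast hroot (k + 1 : ℕ) (by omega)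
  obtain ⟨q, rfl⟩ := Nat.exists_eq_add_of_le hj
  rw [lagrangeF_eq_lagrangeRec, map_xiXNode_eq_iterate_append,
    lagrangeRec_perm List.perm_append_comm hab, lagrangeRec_iterate_append hab,
    lagrangeRec_iterate ht hroot' ha₁ (mul_ne_zero ha₂ (pow_ne_zero q ht)) (hab.mul_pow_right q)]
  rcases lt_or_ge j i with hji | hij
  · simp only [qBinom_eq_zero hji, zero_mul]
  obtain ⟨p, rfl⟩ := Nat.exists_eq_add_of_le hij
  have hexp : t ^ (((i + p + q : ℕ) : ℤ) - (i + p : ℕ) - i) = t ^ q / t ^ i := by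
    rw [show ((i + p + q : ℕ) : ℤ) - (i + p : ℕ) - i = (q : ℤ) - i by push_cast; ring,
      zpow_sub₀ ht, zpow_natCast, zpow_natCast]
  rw [hexp, qPochRatio, show i + p + q - i = p + q by omega, Nat.add_sub_cancel_left,
    Nat.add_sub_cancel_left, inv_pow, inv_pow, pow_add]
  congr 4 <;> field_simp
end
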